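/- arXiv:2504.19926 — 6 statements merged into one kernel-verified Lean document; each statement's English description precedes it below -/
import Mathlib

section
/- Let C₁ and C₂ be F_q-linear codes of length N = t₁ + ⋯ + t_l inside F_q^{t₁} × ⋯ × F_q^{t_l}, and let C = (1−v)C₁ ⊕ vC₂ ⊆ 𝐒. Then C is a skew generalized quasi-cyclic (SGQC) code of block length (t₁, …, t_l) over S if and only if both C₁ and C₂ are SGQC codes of block length (t₁, …, t_l) over F_q. -/
/-!
Since `v` is idempotent, `S` splits as `F × F` through the evaluations `ev0 : v ↦ 0` and
`ev1 : v ↦ 1`, every `s` being `(1 - v) * ev0 s + v * ev1 s` (`Sring_decomp`). Hence a word `z` lies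
in `(1 - v)C₁ ⊕ vC₂` exactly when its coordinatewise images under `ev0` and `ev1` lie in `C₁` and
`C₂` (`mem_code_iff`). The automorphism `θ` fixes `v` and restricts to `a ↦ a ^ p ^ t` on `F`, so it
acts on each factor `F` as that power map (`ev0_theta`, `ev1_theta`), and the skew shift on `S`-words
becomes the pair of skew shifts on `F`-words. Closure under the shift can therefore be checked on
each component separately.
-/

open Polynomial

noncomputable section

/-- The ring `S = F[V]/(V² − V) = F + vF`. -/
abbrev Sring (F : Type) [Field F] : Type := AdjoinRoot (X ^ 2 - X : F[X])

/-- The element `v` (the image of `V`) in `S`, satisfying `v ^ 2 = v`. -/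
def vS (F : Type) [Field F] : Sring F := AdjoinRoot.root (X ^ 2 - X : F[X])

/-- The skew cyclic shift `σ(c₀, …, c_{n−1}) = (θ(c_{n−1}), θ(c₀), …, θ(c_{n−2}))`. -/
def sShift {R : Type} (θ : R → R) {n : ℕ} (c : Fin n → R) : Fin n → R :=
  fun i => θ (c ((finRotate n).symm i))

/-- The blockwise skew shift `σ_l`. -/
def blockShift {R : Type} (θ : R → R) {l : ℕ} {t : Fin l → ℕ}
    (c : ∀ j : Fin l, Fin (t j) → R) : ∀ j : Fin l, Fin (t j) → R :=
  fun j => sShift θ (c j)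

/-- `θ` is the Galois automorphism `a + v·b ↦ a^{p^t} + v·b^{p^t}` of `S`. -/
def IsGaloisAut (p t : ℕ) {F : Type} [Field F] (θ : RingAut (Sring F)) : Prop :=
  ∀ a b : F,
    θ (algebraMap F (Sring F) a + vS F * algebraMap F (Sring F) b) =
      algebraMap F (Sring F) (a ^ p ^ t) + vS F * algebraMap F (Sring F) (b ^ p ^ t)

/-- A set is an SGQC code iff it is (the carrier of) a submodule closed under `σ_l`. -/
def IsSGQC {R : Type} [CommRing R] (θ : R → R) {l : ℕ} {t : Fin l → ℕ}
    (C : Set (∀ j : Fin l, Fin (t j) → R)) : Prop :=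
  ∃ M : Submodule R (∀ j : Fin l, Fin (t j) → R),
    (M : Set (∀ j : Fin l, Fin (t j) → R)) = C ∧ ∀ c ∈ M, blockShift θ c ∈ M

/-- A set is a skew cyclic code iff it is (the carrier of) a submodule closed under `σ`. -/
def IsSkewCyclic {R : Type} [CommRing R] (θ : R → R) {n : ℕ} (K : Set (Fin n → R)) : Prop :=
  ∃ M : Submodule R (Fin n → R), (M : Set (Fin n → R)) = K ∧ ∀ x ∈ M, sShift θ x ∈ M

/-- The Euclidean inner product. -/
def euclidInner {R : Type} [CommRing R] {l : ℕ} {t : Fin l → ℕ}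
    (a b : ∀ j : Fin l, Fin (t j) → R) : R :=
  ∑ j, ∑ i, a j i * b j i

/-- The Hamming weight: the number of nonzero coordinates (over all blocks). -/
def hammingWt {R : Type} [CommRing R] {l : ℕ} {t : Fin l → ℕ}
    (x : ∀ j : Fin l, Fin (t j) → R) : ℕ :=
  ∑ j, Nat.card {i : Fin (t j) // x j i ≠ 0}

/-- The SGQC code generated by a set: the smallest submodule containing it closed under `σ_l`. -/
def sgqcGen {R : Type} [CommRing R] (θ : R → R) {l : ℕ} {t : Fin l → ℕ}
    (X : Set (∀ j : Fin l, Fin (t j) → R)) : Submodule R (∀ j : Fin l, Fin (t j) → R) :=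
  sInf {M | X ⊆ (M : Set _) ∧ ∀ c ∈ M, blockShift θ c ∈ M}

/-- The skew cyclic code generated by a set: the smallest submodule containing it closed under `σ`. -/
def scGen {R : Type} [CommRing R] (θ : R → R) {n : ℕ} (X : Set (Fin n → R)) :
    Submodule R (Fin n → R) :=
  sInf {M | X ⊆ (M : Set _) ∧ ∀ x ∈ M, sShift θ x ∈ M}

/-- The `w`-th Hermitian coefficient `H_w(u, v)`. -/
def hermCoeff {R : Type} [CommRing R] (θ : R → R) {l : ℕ} {t : Fin l → ℕ}
    (ht : ∀ j, 0 < t j) (w : ℕ) (u v : ∀ j : Fin l, Fin (t j) → R) : R :=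
  ∑ j, ∑ i : Fin (t j), u j ⟨((i : ℕ) + w) % t j, Nat.mod_lt _ (ht j)⟩ * θ^[w] (v j i)

/-- The `F`-algebra map `S → F` sending `v` to `0`. -/
def ev0 (F : Type) [Field F] : Sring F →ₐ[F] F :=
  AdjoinRoot.liftAlgHom (X ^ 2 - X : F[X]) (Algebra.ofId F F) 0 (by simp)

/-- The `F`-algebra map `S → F` sending `v` to `1`. -/
def ev1 (F : Type) [Field F] : Sring F →ₐ[F] F :=
  AdjoinRoot.liftAlgHom (X ^ 2 - X : F[X]) (Algebra.ofId F F) 1 (by simp)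

section

variable {F : Type} [Field F]

lemma ev0_vS : ev0 F (vS F) = 0 := by
  simp [ev0, vS]

lemma ev1_vS : ev1 F (vS F) = 1 := by
  simp [ev1, vS]

lemma ev0_alg (a : F) : ev0 F (algebraMap F (Sring F) a) = a := (ev0 F).commutes a

lemma ev1_alg (a : F) : ev1 F (algebraMap F (Sring F) a) = a := (ev1 F).commutes a

lemma vS_sq : vS F * vS F = vS F := by
  have h := AdjoinRoot.mk_self (f := (X ^ 2 - X : F[X]))
  rw [map_sub, map_pow, AdjoinRoot.mk_X, sub_eq_zero] at h
  exact (pow_two _).symm.trans h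

lemma Sring_decomp (s : Sring F) :
    s = (1 - vS F) * algebraMap F (Sring F) (ev0 F s) +
      vS F * algebraMap F (Sring F) (ev1 F s) := by
  induction s using AdjoinRoot.induction_on with
  | _ f =>
  induction f using Polynomial.induction_on' with
  | add f g hf hg =>
    simp only [map_add]
    linear_combination hf + hg
  | monomial n a =>
    have hm : AdjoinRoot.mk (X ^ 2 - X : F[X]) (monomial n a) =
        algebraMap F (Sring F) a * vS F ^ n := by
      rw [← C_mul_X_pow_eq_monomial, map_mul, map_pow, AdjoinRoot.mk_X, AdjoinRoot.mk_C]
      rfl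
    rw [hm]
    simp only [map_mul, map_pow, ev0_vS, ev1_vS, ev0_alg, ev1_alg, one_pow, mul_one]
    rcases Nat.eq_zero_or_pos n with rfl | hn
    · simp only [pow_zero, mul_one]
      ring
    · have hv : vS F ^ n = vS F :=
        IsIdempotentElem.pow_eq vS_sq hn.ne'
      simp only [hv, map_zero, zero_pow hn.ne', mul_zero, zero_add]
      ring

variable {p t : ℕ} [Fact p.Prime] {θ : RingAut (Sring F)}

lemma theta_decomp (hθ : IsGaloisAut p t θ) (s : Sring F) :
    θ s = (1 - vS F) * algebraMap F (Sring F) (ev0 F s ^ p ^ t) +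
      vS F * algebraMap F (Sring F) (ev1 F s ^ p ^ t) := by
  have h0 : (0 : F) ^ p ^ t = 0 :=
    zero_pow (pow_ne_zero _ (Fact.out : p.Prime).ne_zero)
  have hv : θ (vS F) = vS F := by
    simpa [h0] using hθ 0 1
  have ha (a : F) : θ (algebraMap F (Sring F) a) = algebraMap F (Sring F) (a ^ p ^ t) := by
    simpa [h0] using hθ a 0
  conv_lhs => rw [Sring_decomp s]
  rw [map_add, map_mul, map_mul, map_sub, map_one, hv, ha, ha]

lemma ev0_theta (hθ : IsGaloisAut p t θ) (s : Sring F) :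
    ev0 F (θ s) = ev0 F s ^ p ^ t := by
  rw [theta_decomp hθ]
  simp only [map_add, map_mul, map_sub, map_one, ev0_vS, ev0_alg]
  ring

lemma ev1_theta (hθ : IsGaloisAut p t θ) (s : Sring F) :
    ev1 F (θ s) = ev1 F s ^ p ^ t := by
  rw [theta_decomp hθ]
  simp only [map_add, map_mul, map_sub, map_one, ev1_vS, ev1_alg]
  ring

variable {l : ℕ} {tt : Fin l → ℕ}

lemma mem_code_iff (C₁ C₂ : Submodule F (∀ j : Fin l, Fin (tt j) → F))
    (z : ∀ j : Fin l, Fin (tt j) → Sring F) :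
    (∃ x ∈ C₁, ∃ y ∈ C₂, z = fun j i =>
        (1 - vS F) * algebraMap F (Sring F) (x j i) +
          vS F * algebraMap F (Sring F) (y j i)) ↔
      (fun j i => ev0 F (z j i)) ∈ C₁ ∧ (fun j i => ev1 F (z j i)) ∈ C₂ := by
  constructor
  · rintro ⟨x, hx, y, hy, rfl⟩
    simp only [map_add, map_mul, map_sub, map_one, ev0_vS, ev0_alg, ev1_vS, ev1_alg,
      sub_zero, one_mul, zero_mul, add_zero, sub_self, zero_add]
    exact ⟨hx, hy⟩
  · rintro ⟨hx, hy⟩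
    exact ⟨_, hx, _, hy, funext fun j => funext fun i => Sring_decomp _⟩

end

/-- `C = (1−v)C₁ ⊕ vC₂` is an SGQC code over `S` iff
`C₁` and `C₂` are SGQC codes over `F_q`. -/
theorem statement0 (p d t : ℕ) [Fact p.Prime] (hd : 0 < d)
    (F : Type) [Field F] [Fintype F] (hF : Fintype.card F = p ^ d)
    (θ : RingAut (Sring F)) (hθ : IsGaloisAut p t θ)
    (l : ℕ) (tt : Fin l → ℕ) (htt : ∀ j, 0 < tt j)
    (C₁ C₂ : Submodule F (∀ j : Fin l, Fin (tt j) → F)) :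
    IsSGQC (⇑θ) {z : ∀ j : Fin l, Fin (tt j) → Sring F |
        ∃ x ∈ C₁, ∃ y ∈ C₂, z = fun j i =>
          (1 - vS F) * algebraMap F (Sring F) (x j i) +
            vS F * algebraMap F (Sring F) (y j i)} ↔
      IsSGQC (fun a : F => a ^ p ^ t) (C₁ : Set (∀ j : Fin l, Fin (tt j) → F)) ∧
        IsSGQC (fun a : F => a ^ p ^ t) (C₂ : Set (∀ j : Fin l, Fin (tt j) → F)) := by
  constructor
  · rintro ⟨M, hM, hcl⟩
    have h0 : (0 : F) ^ p ^ t = 0 :=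
      zero_pow (pow_ne_zero _ (Fact.out : p.Prime).ne_zero)
    have key (x y) (hx : x ∈ C₁) (hy : y ∈ C₂) :
        blockShift (fun a : F => a ^ p ^ t) x ∈ C₁ ∧
          blockShift (fun a : F => a ^ p ^ t) y ∈ C₂ := by
      have hz := hM.ge ⟨x, hx, y, hy, rfl⟩
      have h := (mem_code_iff C₁ C₂ _).1 (hM.le (hcl _ hz))
      simp only [blockShift, sShift, ev0_theta hθ, ev1_theta hθ, map_add, map_mul, map_sub,
        map_one, ev0_vS, ev0_alg, ev1_vS, ev1_alg, h0, one_pow,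
        sub_zero, one_mul, zero_mul, add_zero, sub_self, zero_add] at h
      exact h
    exact ⟨⟨C₁, rfl, fun x hx => (key x 0 hx C₂.zero_mem).1⟩,
      ⟨C₂, rfl, fun y hy => (key 0 y C₁.zero_mem hy).2⟩⟩
  · rintro ⟨⟨M₁, h₁, hcl₁⟩, ⟨M₂, h₂, hcl₂⟩⟩
    obtain rfl : M₁ = C₁ := SetLike.coe_injective h₁
    obtain rfl : M₂ = C₂ := SetLike.coe_injective h₂
    refine ⟨{ carrier := {z | (fun j i => ev0 F (z j i)) ∈ M₁ ∧ (fun j i => ev1 F (z j i)) ∈ M₂}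
              add_mem' := ?_
              zero_mem' := ?_
              smul_mem' := ?_ }, ?_, ?_⟩
    · rintro a b ⟨ha, ha'⟩ ⟨hb, hb'⟩
      simp only [Set.mem_ofPred_eq, Pi.add_apply, map_add]
      exact ⟨M₁.add_mem ha hb, M₂.add_mem ha' hb'⟩
    · simp only [Set.mem_ofPred_eq, Pi.zero_apply, map_zero]
      exact ⟨M₁.zero_mem, M₂.zero_mem⟩
    · rintro s a ⟨ha, ha'⟩
      simp only [Set.mem_ofPred_eq, Pi.smul_apply, smul_eq_mul, map_mul]
      exact ⟨M₁.smul_mem _ ha, M₂.smul_mem _ ha'⟩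
    · ext z
      exact (mem_code_iff M₁ M₂ z).symm
    · rintro c ⟨hc, hc'⟩
      change (fun j i => ev0 F (blockShift θ c j i)) ∈ M₁ ∧
        (fun j i => ev1 F (blockShift θ c j i)) ∈ M₂
      simp only [blockShift, sShift, ev0_theta hθ, ev1_theta hθ]
      exact ⟨hcl₁ _ hc, hcl₂ _ hc'⟩
end
end

section
/- If C is a skew generalized quasi-cyclic (SGQC) code of block length (t₁, …, t_l) and length N = t₁ + ⋯ + t_l over S, then its Euclidean dual C^⊥ is also an SGQC code of block length (t₁, …, t_l) over S. -/
/-!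
Write `σ` for the blockwise skew shift. Since `θ` is a ring automorphism and `σ` permutes the
coordinates within each block, `⟨σ a, σ b⟩ = θ ⟨a, b⟩` (`euclidInner_blockShift`). The shift `σ` is
injective and the ambient space is finite, so the inclusion `σ C ⊆ C` is an equality
(`exists_blockShift_eq`). Hence, for `a ∈ C^⊥`, every `c ∈ C` is of the form `σ c'` with `c' ∈ C`,
and `⟨σ a, c⟩ = θ ⟨a, c'⟩ = 0`.
-/

open Polynomial

noncomputable section

theorem euclidInner_blockShift {R : Type} [CommRing R] (θ : RingAut R) {l : ℕ} {t : Fin l → ℕ}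
    (a b : ∀ j : Fin l, Fin (t j) → R) :
    euclidInner (blockShift (⇑θ) a) (blockShift (⇑θ) b) = θ (euclidInner a b) := by
  simp only [euclidInner, blockShift, sShift, map_sum, map_mul]
  refine Finset.sum_congr rfl fun j _ => ?_
  exact Equiv.sum_comp (finRotate (t j)).symm fun i => θ (a j i) * θ (b j i)

theorem blockShift_injective {R : Type} {θ : R → R} (hθ : Function.Injective θ) {l : ℕ}
    {t : Fin l → ℕ} :
    Function.Injective (blockShift θ : (∀ j : Fin l, Fin (t j) → R) → _) := by
  intro a b h
  funext j i
  have h' := congrFun (congrFun h j) (finRotate (t j) i)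
  simp only [blockShift, sShift, Equiv.symm_apply_apply] at h'
  exact hθ h'

/-- Over a finite ring, a code closed under an injective blockwise shift is mapped *onto* itself:
an injective self-map of a finite set is surjective. -/
theorem exists_blockShift_eq {R : Type} [CommRing R] [Finite R] {θ : R → R}
    (hθ : Function.Injective θ) {l : ℕ} {t : Fin l → ℕ}
    (C : Submodule R (∀ j : Fin l, Fin (t j) → R)) (hC : ∀ c ∈ C, blockShift θ c ∈ C)
    {c : ∀ j : Fin l, Fin (t j) → R} (hc : c ∈ C) : ∃ c' ∈ C, blockShift θ c' = c := by
  let f : C → C := fun x => ⟨blockShift θ x.1, hC x.1 x.2⟩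
  have hf : Function.Injective f := fun x y h =>
    Subtype.ext (blockShift_injective hθ (congrArg Subtype.val h))
  obtain ⟨x, hx⟩ := Finite.surjective_of_injective hf ⟨c, hc⟩
  exact ⟨x.1, x.2, congrArg Subtype.val hx⟩

theorem finite_Sring (F : Type) [Field F] [Finite F] : Finite (Sring F) := by
  have hm : (X ^ 2 - X : F[X]).Monic := by monicity!
  have := hm.finite_adjoinRoot
  exact Module.finite_of_finite F

/-- The Euclidean dual of an SGQC code over `S` is again an SGQC code
of the same block length. -/
theorem statement1 (p d t : ℕ) [Fact p.Prime] (hd : 0 < d)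
    (F : Type) [Field F] [Fintype F] (hF : Fintype.card F = p ^ d)
    (θ : RingAut (Sring F)) (hθ : IsGaloisAut p t θ)
    (l : ℕ) (tt : Fin l → ℕ) (htt : ∀ j, 0 < tt j)
    (C : Submodule (Sring F) (∀ j : Fin l, Fin (tt j) → Sring F))
    (hC : ∀ c ∈ C, blockShift (⇑θ) c ∈ C) :
    IsSGQC (⇑θ) {a : ∀ j : Fin l, Fin (tt j) → Sring F | ∀ c ∈ C, euclidInner a c = 0} := by
  have := finite_Sring F
  refine ⟨{ carrier := {a | ∀ c ∈ C, euclidInner a c = 0}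
            zero_mem' := ?_, add_mem' := ?_, smul_mem' := ?_ }, rfl, ?_⟩
  · intro a b ha hb c hc
    have h1 := ha c hc
    have h2 := hb c hc
    simp only [euclidInner] at h1 h2 ⊢
    simp [add_mul, Finset.sum_add_distrib, h1, h2]
  · intro c _
    simp [euclidInner]
  · intro r a ha c hc
    have h1 := ha c hc
    simp only [euclidInner] at h1 ⊢
    simp [mul_assoc, ← Finset.mul_sum, h1]
  · intro a ha c hc
    obtain ⟨c', hc', rfl⟩ := exists_blockShift_eq θ.injective C hC hc
    rw [euclidInner_blockShift, ha c' hc', map_zero]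
end
end

section
/- The Gray map preserves orthogonality: if x, y ∈ S^n satisfy Σ_{i=1}^{n} x_i y_i = 0 in S, then Σ_{i=1}^{2n} φ(x)_i φ(y)_i = 0 in F_q. -/
/-!
Since `v` is a root of `V² - V`, evaluating `v` at `0` and at `1` gives two ring homomorphisms
`S → F`, sending `a + v·b` to `a` and to `a + b` respectively. These are the two halves of the Gray
map, so the inner product of the Gray images is the sum of the images of `Σ xᵢ yᵢ` under the two
homomorphisms, and it vanishes when `Σ xᵢ yᵢ` does.
-/

open Polynomial

noncomputable section

/-- Evaluation of `v` at an idempotent `e ∈ F`, as an `F`-algebra map `S → F`; the two coordinates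
of the Gray map are the cases `e = 0` and `e = 1`. -/
def evalAt (F : Type) [Field F] (e : F) (he : e ^ 2 = e) : Sring F →ₐ[F] F :=
  AdjoinRoot.liftAlgHom (X ^ 2 - X : F[X]) (Algebra.ofId F F) e (by simp [he])

lemma evalAt_apply (F : Type) [Field F] (e : F) (he : e ^ 2 = e) (a b : F) :
    evalAt F e he (algebraMap F (Sring F) a + vS F * algebraMap F (Sring F) b) = a + e * b := by
  have hv : evalAt F e he (vS F) = e := AdjoinRoot.liftAlgHom_root _ _ _ _
  rw [map_add, map_mul, hv, AlgHom.commutes, AlgHom.commutes]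
  rfl

/-- The Gray map `φ(a + v·b) = (a, a + b)` preserves orthogonality:
if `Σ xᵢ yᵢ = 0` in `S` then `Σ φ(x)ᵢ φ(y)ᵢ = 0` in `F_q`. -/
theorem statement6 (p d : ℕ) [Fact p.Prime] (hd : 0 < d)
    (F : Type) [Field F] [Fintype F] (hF : Fintype.card F = p ^ d)
    (n : ℕ) (a b a' b' : Fin n → F)
    (h : ∑ i : Fin n,
        (algebraMap F (Sring F) (a i) + vS F * algebraMap F (Sring F) (b i)) *
          (algebraMap F (Sring F) (a' i) + vS F * algebraMap F (Sring F) (b' i)) = 0) :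
    ∑ i : Fin (n + n),
        Fin.append a (fun i => a i + b i) i * Fin.append a' (fun i => a' i + b' i) i = 0 := by
  have h₀ := congrArg (evalAt F 0 (by simp)) h
  have h₁ := congrArg (evalAt F 1 (by simp)) h
  simp only [map_sum, map_mul, evalAt_apply, map_zero, zero_mul, add_zero, one_mul] at h₀ h₁
  simp only [Fin.sum_univ_add, Fin.append_left, Fin.append_right, h₀, h₁, add_zero]
end
end

section
/- Let f, g ∈ F_q^{t₁} × ⋯ × F_q^{t_l}, let C₁ be the SGQC code over F_q generated by f and C₂ the SGQC code over F_q generated by g (smallest F_q-subspaces containing f, respectively g, closed under the blockwise skew shift over F_q). Then the SGQC code C = (1−v)C₁ ⊕ vC₂ over S equals the SGQC code over S generated by the two elements (1−v)·f and v·g. -/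
/-!
The elements `1 - v` and `v` are orthogonal idempotents of `S` summing to `1`. Both are fixed by
`θ`, and multiplication by `s ∈ S` acts on each of the ideals `(1 - v)S` and `vS` as multiplication
by a scalar of `F` (`exists_one_sub_vS_mul`, `exists_vS_mul`). Hence `(1 - v)C₁ ⊕ vC₂` is an
`S`-submodule closed under the blockwise shift, and it contains both generators, so it contains the
code they generate. Conversely, for a `θ`-fixed `e` the vectors `x` over `F` with `e · x` in a given
SGQC code over `S` form an SGQC code over `F` (`mul_mem_of_mem_sgqcGen`); taking `e = 1 - v` and
`e = v` gives the other inclusion.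
-/

open Polynomial

noncomputable section

section Gen

variable {R : Type} [CommRing R] (θ : R → R) {l : ℕ} {t : Fin l → ℕ}

lemma subset_sgqcGen (X : Set (∀ j : Fin l, Fin (t j) → R)) :
    X ⊆ (sgqcGen θ X : Set (∀ j : Fin l, Fin (t j) → R)) := by
  intro x hx
  simp only [sgqcGen, SetLike.mem_coe, Submodule.mem_sInf]
  exact fun M hM => hM.1 hx

lemma blockShift_mem_sgqcGen (X : Set (∀ j : Fin l, Fin (t j) → R))
    {c : ∀ j : Fin l, Fin (t j) → R} (hc : c ∈ sgqcGen θ X) :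
    blockShift θ c ∈ sgqcGen θ X := by
  simp only [sgqcGen, Submodule.mem_sInf] at hc ⊢
  exact fun M hM => hM.2 c (hc M hM)

lemma sgqcGen_le {X : Set (∀ j : Fin l, Fin (t j) → R)}
    {M : Submodule R (∀ j : Fin l, Fin (t j) → R)}
    (hX : X ⊆ (M : Set (∀ j : Fin l, Fin (t j) → R))) (hM : ∀ c ∈ M, blockShift θ c ∈ M) :
    sgqcGen θ X ≤ M :=
  sInf_le ⟨hX, hM⟩

end Gen

lemma vS_mul_self (F : Type) [Field F] : vS F * vS F = vS F := by
  have h : AdjoinRoot.mk (X ^ 2 - X : F[X]) (X ^ 2 - X) = 0 := AdjoinRoot.mk_self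
  rw [map_sub, map_pow, AdjoinRoot.mk_X] at h
  rw [← sub_eq_zero, ← sq]
  exact h

/-- On the ideal `vS` an element of `S` acts through evaluation at `V = 1`. -/
lemma exists_vS_mul {F : Type} [Field F] (s : Sring F) :
    ∃ a : F, s * vS F = algebraMap F (Sring F) a * vS F := by
  obtain ⟨q, rfl⟩ := AdjoinRoot.mk_surjective s
  refine ⟨q.eval 1, ?_⟩
  obtain ⟨r, hr⟩ := X_sub_C_dvd_sub_C_eval (a := (1 : F)) (p := q)
  have h := congrArg (AdjoinRoot.mk (X ^ 2 - X : F[X])) hr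
  rw [map_sub, map_mul, map_sub, AdjoinRoot.mk_C, AdjoinRoot.mk_C, AdjoinRoot.mk_X,
    map_one] at h
  change _ - algebraMap F (Sring F) _ = (vS F - 1) * _ at h
  linear_combination vS F * h + AdjoinRoot.mk (X ^ 2 - X : F[X]) r * vS_mul_self F

/-- On the ideal `(1 - v)S` an element of `S` acts through evaluation at `V = 0`. -/
lemma exists_one_sub_vS_mul {F : Type} [Field F] (s : Sring F) :
    ∃ a : F, s * (1 - vS F) = algebraMap F (Sring F) a * (1 - vS F) := by
  obtain ⟨q, rfl⟩ := AdjoinRoot.mk_surjective s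
  refine ⟨q.eval 0, ?_⟩
  obtain ⟨r, hr⟩ := X_sub_C_dvd_sub_C_eval (a := (0 : F)) (p := q)
  have h := congrArg (AdjoinRoot.mk (X ^ 2 - X : F[X])) hr
  rw [map_sub, map_mul, map_sub, AdjoinRoot.mk_C, AdjoinRoot.mk_C, AdjoinRoot.mk_X,
    map_zero] at h
  change _ - algebraMap F (Sring F) _ = (vS F - 0) * _ at h
  linear_combination (1 - vS F) * h - AdjoinRoot.mk (X ^ 2 - X : F[X]) r * vS_mul_self F

lemma IsGaloisAut.map_algebraMap {p t : ℕ} [Fact p.Prime] {F : Type} [Field F]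
    {θ : RingAut (Sring F)} (hθ : IsGaloisAut p t θ) (a : F) :
    θ (algebraMap F (Sring F) a) = algebraMap F (Sring F) (a ^ p ^ t) := by
  have h := hθ a 0
  rwa [zero_pow (pow_ne_zero t (Fact.out : p.Prime).ne_zero), map_zero, mul_zero, add_zero,
    add_zero] at h

lemma IsGaloisAut.map_vS {p t : ℕ} [Fact p.Prime] {F : Type} [Field F]
    {θ : RingAut (Sring F)} (hθ : IsGaloisAut p t θ) : θ (vS F) = vS F := by
  have h := hθ 0 1
  rwa [zero_pow (pow_ne_zero t (Fact.out : p.Prime).ne_zero), one_pow, map_zero, map_one, mul_one,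
    zero_add] at h

/-- If `e` is fixed by `θ` and `e · f` lies in an SGQC code `N` over `S`, then so does `e · x` for
every `x` in the code over `F` generated by `f`: the `x` with `e · x ∈ N` form an SGQC code. -/
lemma mul_mem_of_mem_sgqcGen {p t : ℕ} [Fact p.Prime] {F : Type} [Field F]
    {θ : RingAut (Sring F)} (hθ : IsGaloisAut p t θ) {e : Sring F} (he : θ e = e)
    {l : ℕ} {tt : Fin l → ℕ} {f : ∀ j : Fin l, Fin (tt j) → F}
    {N : Submodule (Sring F) (∀ j : Fin l, Fin (tt j) → Sring F)}
    (hN : ∀ c ∈ N, blockShift (⇑θ) c ∈ N)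
    (hf : (fun j i => e * algebraMap F (Sring F) (f j i)) ∈ N)
    {x : ∀ j : Fin l, Fin (tt j) → F} (hx : x ∈ sgqcGen (fun a : F => a ^ p ^ t) {f}) :
    (fun j i => e * algebraMap F (Sring F) (x j i)) ∈ N := by
  let M : Submodule F (∀ j : Fin l, Fin (tt j) → F) :=
    { carrier := {x | (fun j i => e * algebraMap F (Sring F) (x j i)) ∈ N}
      zero_mem' := by
        have h := N.zero_mem
        change (fun j i => _) ∈ N
        convert h using 1
        funext j i
        simp
      add_mem' := by
        intro a b ha hb
        have h := N.add_mem ha hb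
        change (fun j i => _) ∈ N
        convert h using 1
        funext j i
        simp [mul_add]
      smul_mem' := by
        intro c a ha
        have h := N.smul_mem (algebraMap F (Sring F) c) ha
        change (fun j i => _) ∈ N
        convert h using 1
        funext j i
        simp only [Pi.smul_apply, smul_eq_mul, map_mul]
        ring }
  have hle : sgqcGen (fun a : F => a ^ p ^ t) {f} ≤ M := by
    refine sgqcGen_le _ (Set.singleton_subset_iff.2 hf) fun c hc => ?_
    have h := hN _ hc
    change (fun j i => _) ∈ N
    convert h using 1
    funext j i
    simp only [blockShift, sShift, map_mul, he, hθ.map_algebraMap]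
  exact hle hx

/-- If `C₁` is the SGQC code over `F_q` generated by `f` and `C₂` the one
generated by `g`, then `C = (1−v)C₁ ⊕ vC₂` equals the SGQC code over `S` generated by the two
elements `(1−v)·f` and `v·g`. -/
theorem statement13 (p d t : ℕ) [Fact p.Prime] (hd : 0 < d)
    (F : Type) [Field F] [Fintype F] (hF : Fintype.card F = p ^ d)
    (θ : RingAut (Sring F)) (hθ : IsGaloisAut p t θ)
    (l : ℕ) (tt : Fin l → ℕ) (htt : ∀ j, 0 < tt j)
    (f g : ∀ j : Fin l, Fin (tt j) → F) :
    {z : ∀ j : Fin l, Fin (tt j) → Sring F |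
        ∃ x ∈ sgqcGen (fun a : F => a ^ p ^ t) {f},
          ∃ y ∈ sgqcGen (fun a : F => a ^ p ^ t) {g},
            z = fun j i =>
              (1 - vS F) * algebraMap F (Sring F) (x j i) +
                vS F * algebraMap F (Sring F) (y j i)} =
      (sgqcGen (⇑θ)
          {(fun j i => (1 - vS F) * algebraMap F (Sring F) (f j i)),
            (fun j i => vS F * algebraMap F (Sring F) (g j i))} :
        Set (∀ j : Fin l, Fin (tt j) → Sring F)) := by
  have hv := hθ.map_vS
  have hv' : θ (1 - vS F) = 1 - vS F := by rw [map_sub, map_one, hv]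
  have hsub := subset_sgqcGen (⇑θ)
    {(fun j i => (1 - vS F) * algebraMap F (Sring F) (f j i)),
      (fun j i => vS F * algebraMap F (Sring F) (g j i))}
  apply Set.Subset.antisymm
  · rintro z ⟨x, hx, y, hy, rfl⟩
    exact Submodule.add_mem _
      (mul_mem_of_mem_sgqcGen hθ hv' (fun c hc => blockShift_mem_sgqcGen _ _ hc)
        (hsub (Set.mem_insert _ _)) hx)
      (mul_mem_of_mem_sgqcGen hθ hv (fun c hc => blockShift_mem_sgqcGen _ _ hc)
        (hsub (Set.mem_insert_of_mem _ rfl)) hy)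
  · let M : Submodule (Sring F) (∀ j : Fin l, Fin (tt j) → Sring F) :=
      { carrier := {z | ∃ x ∈ sgqcGen (fun a : F => a ^ p ^ t) {f},
          ∃ y ∈ sgqcGen (fun a : F => a ^ p ^ t) {g},
            z = fun j i =>
              (1 - vS F) * algebraMap F (Sring F) (x j i) +
                vS F * algebraMap F (Sring F) (y j i)}
        zero_mem' := by
          refine ⟨0, Submodule.zero_mem _, 0, Submodule.zero_mem _, ?_⟩
          funext j i
          simp
        add_mem' := by
          rintro _ _ ⟨x, hx, y, hy, rfl⟩ ⟨x', hx', y', hy', rfl⟩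
          refine ⟨x + x', Submodule.add_mem _ hx hx', y + y', Submodule.add_mem _ hy hy', ?_⟩
          funext j i
          simp only [Pi.add_apply, map_add]
          ring
        smul_mem' := by
          rintro s _ ⟨x, hx, y, hy, rfl⟩
          obtain ⟨a, ha⟩ := exists_one_sub_vS_mul s
          obtain ⟨b, hb⟩ := exists_vS_mul s
          refine ⟨a • x, Submodule.smul_mem _ a hx, b • y, Submodule.smul_mem _ b hy, ?_⟩
          funext j i
          simp only [Pi.smul_apply, smul_eq_mul, map_mul]
          linear_combination algebraMap F (Sring F) (x j i) * ha +
            algebraMap F (Sring F) (y j i) * hb }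
    have hle : sgqcGen (⇑θ)
        {(fun j i => (1 - vS F) * algebraMap F (Sring F) (f j i)),
          (fun j i => vS F * algebraMap F (Sring F) (g j i))} ≤ M := by
      refine sgqcGen_le _ ?_ ?_
      · rintro z (rfl | rfl)
        · refine ⟨f, subset_sgqcGen _ _ rfl, 0, Submodule.zero_mem _, ?_⟩
          funext j i
          simp
        · refine ⟨0, Submodule.zero_mem _, g, subset_sgqcGen _ _ rfl, ?_⟩
          funext j i
          simp
      · rintro _ ⟨x, hx, y, hy, rfl⟩
        refine ⟨_, blockShift_mem_sgqcGen _ _ hx, _, blockShift_mem_sgqcGen _ _ hy, ?_⟩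
        funext j i
        simp only [blockShift, sShift, map_add, map_mul, hv, hv', hθ.map_algebraMap]
    exact hle
end
end

section
/- Let C be an SGQC code of block length (t₁, …, t_l) over S. Then the cardinality of C equals the product of the cardinalities of its section codes: |C| = |K₁| · |K₂| · ⋯ · |K_l|. -/
/-!
The cardinality identity is linear algebra over the filtration of the code `C` by trailing zeros.
Let `C_k` be the subgroup of codewords whose blocks of index `≥ k` all vanish, so that `C_0 = 0` and
`C_l = C`. Projection to block `k` maps `C_{k+1}` onto the section code of block `k`
and has kernel `C_k`, hence `|C_{k+1}| = |C_k| * |K_k|` by the first isomorphism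
theorem (`card_eq_card_inf_ker_mul_card_map`); the product formula follows by induction on `k`
(`card_trailing`).
-/

open Polynomial

noncomputable section

/-- First isomorphism theorem, in the form of an order formula, for the restriction of `f` to
a subgroup `A`. -/
lemma card_eq_card_inf_ker_mul_card_map {G H : Type*} [AddCommGroup G] [AddCommGroup H]
    (A : AddSubgroup G) (f : G →+ H) :
    Nat.card A = Nat.card ↥(A ⊓ f.ker) * Nat.card ↥(A.map f) := by
  have h := (f.comp A.subtype).ker.card_mul_index
  rw [AddSubgroup.index_ker, AddMonoidHom.range_comp, AddSubgroup.range_subtype] at h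
  rw [← h]
  congr 1
  have hmap : ((f.comp A.subtype).ker).map A.subtype = A ⊓ f.ker := by
    ext x
    simp [AddMonoidHom.mem_ker, AddSubgroup.mem_map, and_comm]
  rw [← hmap]
  exact Nat.card_congr
    ((f.comp A.subtype).ker.equivMapOfInjective _ A.subtype_injective).toEquiv

/-- The subgroup of those elements of `A` whose blocks of index `≥ k` all vanish. -/
def trailing {l : ℕ} {V : Fin l → Type*} [∀ j, AddCommGroup (V j)]
    (A : AddSubgroup (∀ j, V j)) (k : ℕ) : AddSubgroup (∀ j, V j) where
  carrier := {c | c ∈ A ∧ ∀ j : Fin l, k ≤ j → c j = 0}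
  zero_mem' := ⟨A.zero_mem, fun _ _ => rfl⟩
  add_mem' := fun ha hb => ⟨A.add_mem ha.1 hb.1, fun j hj => by simp [ha.2 j hj, hb.2 j hj]⟩
  neg_mem' := fun ha => ⟨A.neg_mem ha.1, fun j hj => by simp [ha.2 j hj]⟩

lemma mem_trailing {l : ℕ} {V : Fin l → Type*} [∀ j, AddCommGroup (V j)]
    {A : AddSubgroup (∀ j, V j)} {k : ℕ} {c : ∀ j, V j} :
    c ∈ trailing A k ↔ c ∈ A ∧ ∀ j : Fin l, k ≤ j → c j = 0 := Iff.rfl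

/-- The kernel of the projection to block `i` on the `(i + 1)`-st step of the filtration is
the `i`-th step. -/
lemma trailing_succ_inf_ker {l : ℕ} {V : Fin l → Type*} [∀ j, AddCommGroup (V j)]
    (A : AddSubgroup (∀ j, V j)) (i : Fin l) :
    trailing A (i + 1) ⊓ (Pi.evalAddMonoidHom V i).ker = trailing A i := by
  ext c
  simp only [AddSubgroup.mem_inf, mem_trailing, AddMonoidHom.mem_ker, Pi.evalAddMonoidHom_apply]
  constructor
  · rintro ⟨⟨hA, h⟩, hi⟩
    refine ⟨hA, fun j hj => ?_⟩
    obtain rfl | hne := eq_or_ne i j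
    · exact hi
    · exact h j (by have := Fin.val_ne_of_ne hne; omega)
  · rintro ⟨hA, h⟩
    exact ⟨⟨hA, fun j hj => h j (by omega)⟩, h i le_rfl⟩

lemma card_trailing {l : ℕ} {V : Fin l → Type*} [∀ j, AddCommGroup (V j)]
    (A : AddSubgroup (∀ j, V j)) (k : ℕ) (hk : k ≤ l) :
    Nat.card (trailing A k) =
      ∏ i : Fin k, Nat.card ↥{x : V (i.castLE hk) |
        ∃ c ∈ A, c (i.castLE hk) = x ∧ ∀ j : Fin l, i.castLE hk < j → c j = 0} := by
  induction k with
  | zero =>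
    have : trailing A 0 = ⊥ := by
      rw [eq_bot_iff]
      exact fun c hc => funext fun j => hc.2 j (Nat.zero_le _)
    simp [this]
  | succ k ih =>
    rw [Fin.prod_univ_castSucc, card_eq_card_inf_ker_mul_card_map (trailing A (k + 1))
      (Pi.evalAddMonoidHom V ⟨k, hk⟩), trailing_succ_inf_ker A ⟨k, hk⟩, ih (by omega)]
    congr 1
    refine Nat.card_congr (Equiv.setCongr (Set.ext fun x => ?_))
    constructor
    · rintro ⟨c, hc, rfl⟩
      exact ⟨c, hc.1, rfl, hc.2⟩
    · rintro ⟨c, hc, hx, h⟩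
      exact ⟨c, ⟨hc, h⟩, hx⟩

/-- For an SGQC code `C` over `S`, the cardinality of `C` is the product of
the cardinalities of its section codes: `|C| = |K₁| ⋯ |K_l|`. -/
theorem statement16 (p d t : ℕ) [Fact p.Prime] (hd : 0 < d)
    (F : Type) [Field F] [Fintype F] (hF : Fintype.card F = p ^ d)
    (θ : RingAut (Sring F)) (hθ : IsGaloisAut p t θ)
    (l : ℕ) (tt : Fin l → ℕ) (htt : ∀ j, 0 < tt j)
    (C : Submodule (Sring F) (∀ j : Fin l, Fin (tt j) → Sring F))
    (hC : ∀ c ∈ C, blockShift (⇑θ) c ∈ C) :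
    Nat.card ↥C =
      ∏ i : Fin l,
        Nat.card ↥{pv : Fin (tt i) → Sring F |
          ∃ c ∈ C, c i = pv ∧ ∀ j : Fin l, i < j → c j = 0} := by
  have htop : trailing C.toAddSubgroup l = C.toAddSubgroup := by
    ext c
    exact ⟨fun h => h.1, fun h => ⟨h, fun j hj => absurd j.isLt (not_lt.mpr hj)⟩⟩
  have h := card_trailing C.toAddSubgroup l le_rfl
  rw [htop] at h
  exact h
end
end

section
/- Let C be an SGQC code of block length (t₁, …, t_l) over S and let M = lcm(m_t, t₁, …, t_l), where m_t is the multiplicative order of θ_t. Then the Euclidean dual of C admits the Hermitian description C^⊥ = {v ∈ 𝐒 : H_w(u, v) = 0 for all u ∈ C and all 0 ≤ w ≤ M−1}. -/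
/-!
For `0 ≤ k ≤ M` the Hermitian coefficient is a twisted Euclidean inner product,
`H_k(u, v) = θ^k ⟨v, σ_l^{M-k} u⟩`, because `θ^M = id` and every block length divides `M`
(`hermCoeff_eq`). Since `C` is stable under `σ_l`, a vector orthogonal to `C` is orthogonal to
`σ_l^{M-k} u` for each `u ∈ C`, so all its Hermitian coefficients vanish. Conversely `H_0` is the
Euclidean inner product, and the index `k = 0` is available because `M > 0`: the ring `S` is
finite (`finite_Sring`), hence `θ` has finite order.
-/

open Polynomial

noncomputable section

/-- Moving forward `n` places cyclically and then applying `σ_l^n` recovers the original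
coordinate, twisted by `θ^n`. Indexing by the target position `(i + n) mod t_j` avoids
subtraction in the index. -/
theorem blockShift_iterate_apply {R : Type} (θ : R → R) {l : ℕ} {t : Fin l → ℕ}
    (ht : ∀ j, 0 < t j) (c : ∀ j : Fin l, Fin (t j) → R) (j : Fin l) (i : Fin (t j)) (n : ℕ) :
    (blockShift θ)^[n] c j ⟨((i : ℕ) + n) % t j, Nat.mod_lt _ (ht j)⟩ = θ^[n] (c j i) := by
  induction n with
  | zero => simp [Nat.mod_eq_of_lt i.isLt]
  | succ n ih =>
    rw [Function.iterate_succ_apply', Function.iterate_succ_apply', ← ih]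
    have hrot : (finRotate (t j)).symm ⟨((i : ℕ) + (n + 1)) % t j, Nat.mod_lt _ (ht j)⟩ =
        ⟨((i : ℕ) + n) % t j, Nat.mod_lt _ (ht j)⟩ := by
      rw [Equiv.symm_apply_eq]
      have : NeZero (t j) := ⟨(ht j).ne'⟩
      ext
      rw [finRotate_apply, Fin.val_add]
      simp [← add_assoc]
    simp only [blockShift, sShift, hrot]

/-- When every `t_j` divides `M`, `θ^M = id` and `k ≤ M`, the Hermitian coefficient `H_k(u, v)`
is a Euclidean inner product with a shift of `u`, up to the automorphism `θ^k`. -/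
theorem hermCoeff_eq {R : Type} [CommRing R] (θ : RingAut R) {l : ℕ} {t : Fin l → ℕ}
    (ht : ∀ j, 0 < t j) {M k : ℕ} (hdvd : ∀ j, t j ∣ M) (hM : θ ^ M = 1) (hk : k ≤ M)
    (u v : ∀ j : Fin l, Fin (t j) → R) :
    hermCoeff (⇑θ) ht k u v = (θ ^ k) (euclidInner v ((blockShift (⇑θ))^[M - k] u)) := by
  have hpow : ∀ (n : ℕ) (x : R), (⇑θ)^[n] x = (θ ^ n) x := by
    intro n
    induction n with
    | zero => intro x; rfl
    | succ n ih => intro x; rw [Function.iterate_succ_apply, ih, pow_succ]; rfl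
  simp only [hermCoeff, euclidInner, map_sum, map_mul]
  refine Finset.sum_congr rfl fun j _ => Finset.sum_congr rfl fun i _ => ?_
  have hi : i = ⟨(((i : ℕ) + k) % t j + (M - k)) % t j, Nat.mod_lt _ (ht j)⟩ := by
    obtain ⟨r, hr⟩ := hdvd j
    ext
    simp only [Nat.mod_add_mod]
    rw [add_assoc, Nat.add_sub_cancel' hk, hr, Nat.add_mul_mod_self_left,
      Nat.mod_eq_of_lt i.isLt]
  have hs := blockShift_iterate_apply (⇑θ) ht u j
    ⟨((i : ℕ) + k) % t j, Nat.mod_lt _ (ht j)⟩ (M - k)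
  simp only [← hi] at hs
  rw [hs, hpow, hpow, ← RingAut.mul_apply, ← pow_add, Nat.add_sub_cancel' hk, hM,
    RingAut.one_apply, mul_comm]

/-- For an SGQC code `C` over `S` and `M = lcm(m_t, t₁, …, t_l)`, the
Euclidean dual of `C` admits the Hermitian description
`C^⊥ = {v : H_w(u, v) = 0 for all u ∈ C and all 0 ≤ w ≤ M−1}`. -/
theorem statement18 (p d t : ℕ) [Fact p.Prime] (hd : 0 < d)
    (F : Type) [Field F] [Fintype F] (hF : Fintype.card F = p ^ d)
    (θ : RingAut (Sring F)) (hθ : IsGaloisAut p t θ)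
    (l : ℕ) (tt : Fin l → ℕ) (htt : ∀ j, 0 < tt j)
    (C : Submodule (Sring F) (∀ j : Fin l, Fin (tt j) → Sring F))
    (hC : ∀ c ∈ C, blockShift (⇑θ) c ∈ C)
    (M : ℕ) (hM : M = Nat.lcm (orderOf θ) (Finset.univ.lcm tt)) :
    {a : ∀ j : Fin l, Fin (tt j) → Sring F | ∀ c ∈ C, euclidInner a c = 0} =
      {w : ∀ j : Fin l, Fin (tt j) → Sring F |
        ∀ u ∈ C, ∀ k, k < M → hermCoeff (⇑θ) htt k u w = 0} := by
  have := finite_Sring F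
  have hfin : Finite (RingAut (Sring F)) :=
    Finite.of_injective (fun f : RingAut (Sring F) => (f : Sring F → Sring F))
      DFunLike.coe_injective
  have hdvd : ∀ j, tt j ∣ M := fun j =>
    hM ▸ (Finset.dvd_lcm (Finset.mem_univ j)).trans (Nat.dvd_lcm_right _ _)
  have hone : θ ^ M = 1 := orderOf_dvd_iff_pow_eq_one.mp (hM ▸ Nat.dvd_lcm_left _ _)
  have hpos : 0 < M := by
    rw [hM]
    refine Nat.lcm_pos (orderOf_pos θ) (Nat.pos_of_ne_zero fun h => ?_)
    obtain ⟨j, -, hj⟩ := Finset.lcm_eq_zero_iff.mp h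
    exact (htt j).ne' hj
  have hiter : ∀ n : ℕ, ∀ c ∈ C, (blockShift (⇑θ))^[n] c ∈ C := by
    intro n
    induction n with
    | zero => exact fun c hc => hc
    | succ n ih => exact fun c hc => ih _ (hC c hc)
  ext a
  constructor
  · intro ha u hu k hk
    rw [hermCoeff_eq θ htt hdvd hone hk.le, ha _ (hiter _ u hu), map_zero]
  · intro ha c hc
    -- `H_0(c, a)` is the Euclidean inner product itself.
    simpa [hermCoeff, euclidInner, Nat.mod_eq_of_lt, mul_comm] using ha c hc 0 hpos
end
end
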